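/- Fix γ > 0. With S, D(R,P), E_{γ,L}, and F_γ(L) as follows: S = {(R,P) : R > 0, P > 2^{2R} − 1}; s = P/(2^{2R} − 1); D(R,P) = (1/2)·(s − 1 − ln s); E_{γ,L}(R,P) = P/R + γ·max(1/R, 1)·max(0, ln(L/D(R,P))); F_γ(L) = inf_{(R,P) ∈ S} E_{γ,L}(R,P). Then for every ε > 0 there exist δ > 0 and L₀ > 1 such that for all L ≥ L₀ and all (R,P) ∈ S with E_{γ,L}(R,P) ≤ F_γ(L) + δ, one has |R − 1| < ε. In other words, the rate optimizing the combined transmission-plus-decoding energy bound is bounded away from zero and converges to 1 as the desired bit-error probability goes to zero (L = ln(1/⟨P_e⟩) → ∞). -/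

import Mathlib

open Real Filter

/-- `s = P / (2^(2R) - 1)` is the critical noise variance at which the AWGN
capacity equals `R` (noise variance normalized to `1`), and
`D(R,P) = (1/2)(s - 1 - ln s)` is the Gaussian KL divergence `D(s‖1)`. -/
noncomputable def greenKL (R P : ℝ) : ℝ :=
  (1 / 2) * (P / ((2 : ℝ) ^ (2 * R) - 1) - 1 -
    Real.log (P / ((2 : ℝ) ^ (2 * R) - 1)))

/-- Normalized total (transmission plus decoding) energy per information bit:
`E_{γ,L}(R,P) = P/R + γ * max (1/R) 1 * max 0 (ln (L / D(R,P)))`. -/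
noncomputable def greenEnergy (γ L R P : ℝ) : ℝ :=
  P / R + γ * max (1 / R) 1 * max 0 (Real.log (L / greenKL R P))

/-- `F_γ(L)`: the infimum of the energy bound over the feasible set
`S = {(R,P) : R > 0, P > 2^(2R) - 1}`. -/
noncomputable def greenMinEnergy (γ L : ℝ) : ℝ :=
  sInf {e : ℝ | ∃ R P : ℝ, 0 < R ∧ (2 : ℝ) ^ (2 * R) - 1 < P ∧
    e = greenEnergy γ L R P}

/-- `2 ^ (2R) - 1 ≥ R` for `R > 0`. -/
lemma green_pow_ge {R : ℝ} (hR : 0 < R) : R ≤ (2 : ℝ) ^ (2 * R) - 1 := by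
  rw [Real.rpow_def_of_pos (by norm_num)]
  have h1 := Real.add_one_le_exp (Real.log 2 * (2 * R))
  have h2 := Real.log_two_gt_d9
  nlinarith

lemma green_pow_ge_four (R : ℝ) (hR : 1 ≤ R) : 4 * R ≤ (2 : ℝ) ^ (2 * R) := by
  have h4 : (2 : ℝ) ^ (2 * R) = 4 * Real.exp (Real.log 2 * (2 * (R - 1))) := by
    have : 2 * R = 2 + 2 * (R - 1) := by ring
    rw [this, Real.rpow_add (by norm_num), ← Real.rpow_def_of_pos (by norm_num)]
    norm_num
  rw [h4]
  have h1 := Real.add_one_le_exp (Real.log 2 * (2 * (R - 1)))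
  have h2 := Real.log_two_gt_d9
  nlinarith

lemma green_energy_nonneg {γ L R P : ℝ} (hγ : 0 < γ) (hR : 0 < R)
    (hP : (2 : ℝ) ^ (2 * R) - 1 < P) : 0 ≤ greenEnergy γ L R P := by
  have := green_pow_ge hR
  have hP0 : 0 < P := by linarith
  unfold greenEnergy
  have h1 : 0 ≤ max (1 / R) 1 := le_max_of_le_right zero_le_one
  have h2 : 0 ≤ max 0 (Real.log (L / greenKL R P)) := le_max_left _ _
  positivity

lemma green_min_le {γ L R P : ℝ} (hγ : 0 < γ) (hR : 0 < R)
    (hP : (2 : ℝ) ^ (2 * R) - 1 < P) : greenMinEnergy γ L ≤ greenEnergy γ L R P := by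
  apply csInf_le
  · refine ⟨0, ?_⟩
    rintro e ⟨R', P', hR', hP', rfl⟩
    exact green_energy_nonneg hγ hR' hP'
  · exact ⟨R, P, hR, hP, rfl⟩

lemma green_pow_one : (2 : ℝ) ^ (2 * (1 : ℝ)) - 1 = 3 := by norm_num

/-- Case of rates above one. -/
lemma green_upper {γ L R P δ : ℝ} (hγ : 0 < γ) (hR : 1 ≤ R)
    (hP : (2 : ℝ) ^ (2 * R) - 1 < P)
    (hE : greenEnergy γ L R P ≤ greenMinEnergy γ L + δ) : R - 1 ≤ δ * R := by
  have hR0 : 0 < R := by linarith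
  have hA := green_pow_ge_four R hR
  set A := (2 : ℝ) ^ (2 * R) - 1 with hAdef
  have hA0 : 0 < A := by linarith
  set s := P / A with hs
  have hs1 : 1 < s := (one_lt_div hA0).2 hP
  have hPs : P = s * A := by rw [hs]; field_simp
  have hmin := green_min_le (γ := γ) (L := L) (R := 1) (P := 3 * s) hγ one_pos
    (by rw [green_pow_one]; linarith)
  have hKL : greenKL 1 (3 * s) = greenKL R P := by
    unfold greenKL
    rw [green_pow_one, ← hAdef, ← hs, mul_div_cancel_left₀ _ (by norm_num : (3 : ℝ) ≠ 0)]
  have hmax : max (1 / R) 1 = 1 := max_eq_right ((div_le_one hR0).2 hR)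
  unfold greenEnergy at hE hmin
  rw [hKL] at hmin
  rw [hmax] at hE
  simp only [div_one, max_self] at hmin
  have h : P / R ≤ 3 * s + δ := by linarith
  rw [div_le_iff₀ hR0, hPs] at h
  nlinarith

lemma green_lower {γ ε x R P C : ℝ} (hγ : 0 < γ) (hε : 0 < ε) (hC : 0 < C)
    (hR : 0 < R) (hRε : R ≤ 1 - ε) (hx1 : 1 ≤ x)
    (hx2 : 2 * (C + γ) ≤ (ε / 4) ^ 2 * x) (hx3 : C < γ * (ε / 2) * x)
    (hP : (2 : ℝ) ^ (2 * R) - 1 < P)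
    (hE : greenEnergy γ (Real.exp x) R P ≤ C + γ * x) : False := by
  have hA := green_pow_ge hR
  set A := (2 : ℝ) ^ (2 * R) - 1 with hAdef
  have hA0 : 0 < A := by linarith
  set s := P / A with hs
  have hs1 : 1 < s := (one_lt_div hA0).2 hP
  have hPs : P = s * A := by rw [hs]; field_simp
  have hsP : s ≤ P / R := by
    rw [le_div_iff₀ hR, hPs]
    nlinarith
  have hlog := Real.log_pos hs1
  have hlt := Real.log_lt_sub_one_of_pos (by linarith : 0 < s) hs1.ne'
  have hD : greenKL R P = (1 / 2) * (s - 1 - Real.log s) := rfl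
  have hD0 : 0 < greenKL R P := by rw [hD]; linarith
  have hDs : greenKL R P ≤ s := by rw [hD]; linarith
  have hlD : Real.log (greenKL R P) ≤ Real.log s := Real.log_le_log hD0 hDs
  unfold greenEnergy at hE
  rw [Real.log_div (Real.exp_pos x).ne' hD0.ne', Real.log_exp] at hE
  set M := max 0 (x - Real.log (greenKL R P)) with hM
  have hM0 : 0 ≤ M := le_max_left _ _
  have hM1 : x - Real.log s ≤ M := le_trans (by linarith) (le_max_right _ _)
  have hm : 1 + ε ≤ max (1 / R) 1 := by
    apply le_max_of_le_left
    rw [le_div_iff₀ hR]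
    nlinarith
  have hT : γ * (1 + ε) * M ≤ γ * max (1 / R) 1 * M := by gcongr
  have hT0 : 0 ≤ γ * (1 + ε) * M := by positivity
  have hsle : s ≤ C + γ * x := by linarith
  have hexp := Real.quadratic_le_exp_of_nonneg (x := ε / 4 * x) (by positivity)
  have hsexp : s ≤ Real.exp (ε / 4 * x) := by
    have h1 : 2 * (C + γ) * x ≤ (ε / 4) ^ 2 * x * x := by gcongr
    have h2 : C ≤ C * x := by nlinarith
    have h3 : 0 < ε / 4 * x := by positivity
    nlinarith
  have hls : Real.log s ≤ ε / 4 * x := by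
    rw [Real.log_le_iff_le_exp (by linarith)]
    exact hsexp
  have hM2 : (1 - ε / 4) * x ≤ M := by linarith
  have hε1 : ε < 1 := by linarith
  have h5 : γ * (1 + ε) * ((1 - ε / 4) * x) ≤ γ * (1 + ε) * M := by gcongr
  have h6 : γ * x * (1 + ε / 2) ≤ γ * (1 + ε) * ((1 - ε / 4) * x) := by
    have : 0 < γ * x := by positivity
    have h7 : 1 + ε / 2 ≤ (1 + ε) * (1 - ε / 4) := by nlinarith
    calc γ * x * (1 + ε / 2) ≤ γ * x * ((1 + ε) * (1 - ε / 4)) := by gcongr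
      _ = _ := by ring
  linarith

/-- The rate optimizing the combined transmission-plus-decoding energy bound
converges to `1` as the desired bit-error probability goes to zero
(`L = ln (1/⟨P_e⟩) → ∞`): every near-optimal `(R,P)` has `R` close to `1`. -/
theorem green_optimal_rate_tendsto_one (γ : ℝ) (hγ : 0 < γ) :
    ∀ ε : ℝ, 0 < ε → ∃ δ : ℝ, 0 < δ ∧ ∃ L₀ : ℝ, 1 < L₀ ∧
      ∀ L : ℝ, L₀ ≤ L → ∀ R P : ℝ, 0 < R → (2 : ℝ) ^ (2 * R) - 1 < P →
        greenEnergy γ L R P ≤ greenMinEnergy γ L + δ → |R - 1| < ε := by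
  intro ε hε
  set D₀ := greenKL 1 6 with hD₀
  have hD₀pos : 0 < D₀ := by
    have h := Real.log_lt_sub_one_of_pos (by norm_num : (0 : ℝ) < 2) (by norm_num)
    rw [hD₀]
    unfold greenKL
    rw [green_pow_one]
    norm_num at h ⊢
    linarith
  set C := 7 + γ * |Real.log D₀| with hC
  have hC0 : 0 < C := by positivity
  have hq1 : 0 < 2 * (C + γ) / (ε / 4) ^ 2 := by positivity
  have hq2 : 0 < C / (γ * (ε / 2)) := by positivity
  refine ⟨ε / (2 * (1 + ε)), by positivity,
    Real.exp (1 + 2 * (C + γ) / (ε / 4) ^ 2 + C / (γ * (ε / 2))),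
    Real.one_lt_exp_iff.2 (by linarith), ?_⟩
  intro L hL R P hR hP hE
  have hL0 : 0 < L := lt_of_lt_of_le (Real.exp_pos _) hL
  obtain ⟨x, rfl⟩ : ∃ x, L = Real.exp x := ⟨Real.log L, (Real.exp_log hL0).symm⟩
  rw [Real.exp_le_exp] at hL
  by_contra hcon
  rcases le_abs'.1 (not_lt.1 hcon) with h | h
  · have hmin := green_min_le (γ := γ) (L := Real.exp x) (R := 1) (P := 6) hγ one_pos
      (by rw [green_pow_one]; norm_num)
    have hδ : ε / (2 * (1 + ε)) ≤ 1 := by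
      rw [div_le_one (by positivity)]
      linarith
    have hE1 : greenEnergy γ (Real.exp x) 1 6 ≤ 6 + γ * (x + |Real.log D₀|) := by
      unfold greenEnergy
      rw [← hD₀, Real.log_div (Real.exp_pos x).ne' hD₀pos.ne', Real.log_exp]
      simp only [div_one, max_self, mul_one]
      have h1 := neg_abs_le (Real.log D₀)
      have h2 := abs_nonneg (Real.log D₀)
      have : max 0 (x - Real.log D₀) ≤ x + |Real.log D₀| :=
        max_le (by linarith) (by linarith)
      gcongr
    refine green_lower (C := C) hγ hε hC0 hR (by linarith) (by linarith : 1 ≤ x) ?_ ?_ hP ?_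
    · have : 2 * (C + γ) / (ε / 4) ^ 2 ≤ x := by linarith
      rw [div_le_iff₀ (by positivity)] at this
      linarith
    · have : C / (γ * (ε / 2)) < x := by linarith
      rw [div_lt_iff₀ (by positivity)] at this
      linarith
    · rw [hC]
      linarith
  · have h1 := green_upper hγ (by linarith) hP hE
    rw [div_mul_eq_mul_div, le_div_iff₀ (by positivity)] at h1
    nlinarith
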